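/- Let 1/2 < s < 1. Then (2^{2s} − 2)/(2s) > 0 and B(s + 1/2, 1 − s) − 2^{2s} > 0, where B denotes the Euler Beta function. -/

import Mathlib

open intervalIntegral

/-!
Put `y = s - 1/2`. Legendre's duplication formula rewrites the Beta value as
`B(1 + y, 1/2 - y) = 2 ^ (2 * y + 1) * Γ(1 + y) * Γ(1 - 2 * y) / Γ(1 - y)`, so the claim becomes
`Γ(1 - y) < Γ(1 + y) * Γ(1 - 2 * y)`. Log-convexity of `Γ` at the midpoint of `1 - 2 * y` and `1`
gives `Γ(1 - y) ^ 2 ≤ Γ(1 - 2 * y)`, and Euler's reflection formula gives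
`Γ(1 + y) * Γ(1 - y) = π * y / sin (π * y) > 1`.
-/

open Real ProbabilityTheory Set

theorem rpow_sub_self_div_pos {a x : ℝ} (ha : 1 < a) (hx : x < 0 ∨ 1 < x) :
    0 < (a ^ x - a) / x := by
  rcases hx with hneg | hone
  · exact div_pos_of_neg_of_neg
      (sub_neg.2 ((rpow_lt_one_of_one_lt_of_neg ha hneg).trans ha)) hneg
  · exact div_pos (sub_pos.2 (self_lt_rpow_of_one_lt ha hone)) (zero_lt_one.trans hone)

theorem integral_rpow_mul_one_sub_rpow {a b : ℝ} (ha : 0 < a) (hb : 0 < b) :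
    ∫ t in (0 : ℝ)..1, t ^ (a - 1) * (1 - t) ^ (b - 1) = beta a b := by
  have hcast : ((∫ t in (0 : ℝ)..1, t ^ (a - 1) * (1 - t) ^ (b - 1) : ℝ) : ℂ) =
      Complex.betaIntegral a b := by
    rw [Complex.betaIntegral, ← intervalIntegral.integral_ofReal]
    refine integral_congr fun t ht => ?_
    rw [uIcc_of_le zero_le_one] at ht
    push_cast [Complex.ofReal_cpow ht.1, Complex.ofReal_cpow (sub_nonneg.2 ht.2)]
    rfl
  rw [beta_eq_betaIntegralReal a b ha hb, ← hcast, Complex.ofReal_re]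

theorem Gamma_midpoint_sq_le {a b : ℝ} (ha : 0 < a) (hb : 0 < b) :
    Gamma ((a + b) / 2) ^ 2 ≤ Gamma a * Gamma b := by
  have hmid : Gamma ((a + b) / 2) ≤ √(Gamma a * Gamma b) := by
    have hlog := Gamma_mul_add_mul_le_rpow_Gamma_mul_rpow_Gamma ha hb
      one_half_pos one_half_pos (add_halves 1)
    rwa [← sqrt_eq_rpow, ← sqrt_eq_rpow, ← sqrt_mul (Gamma_pos_of_pos ha).le,
      show 1 / 2 * a + 1 / 2 * b = (a + b) / 2 by ring] at hlog
  exact (le_sqrt' (Gamma_pos_of_pos (by positivity))).1 hmid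

theorem Gamma_one_add_mul_Gamma_one_sub {y : ℝ} (hy : y ≠ 0) :
    Gamma (1 + y) * Gamma (1 - y) = π * y / sin (π * y) := by
  rw [add_comm, Gamma_add_one hy, mul_assoc, Gamma_mul_Gamma_one_sub, ← mul_div_assoc, mul_comm y]

theorem one_lt_Gamma_one_add_mul_Gamma_one_sub {y : ℝ} (hy : |y| < 1) (hy0 : y ≠ 0) :
    1 < Gamma (1 + y) * Gamma (1 - y) := by
  wlog hpos : 0 < y generalizing y
  · have hneg := this (y := -y) (by rwa [abs_neg]) (neg_ne_zero.2 hy0)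
      (neg_pos.2 (lt_of_le_of_ne (not_lt.1 hpos) hy0))
    rwa [sub_neg_eq_add, ← sub_eq_add_neg, mul_comm] at hneg
  have hπy : 0 < π * y := mul_pos pi_pos hpos
  have hsin : 0 < sin (π * y) :=
    sin_pos_of_pos_of_lt_pi hπy (mul_lt_of_lt_one_right pi_pos (abs_lt.1 hy).2)
  rw [Gamma_one_add_mul_Gamma_one_sub hy0, one_lt_div hsin]
  exact sin_lt hπy

theorem Gamma_one_sub_lt_Gamma_one_add_mul {y : ℝ} (hy : y ∈ Ioo (-1) (1 / 2)) (hy0 : y ≠ 0) :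
    Gamma (1 - y) < Gamma (1 + y) * Gamma (1 - 2 * y) := by
  obtain ⟨hlower, hupper⟩ := hy
  have hadd : 0 < Gamma (1 + y) := Gamma_pos_of_pos (by linarith)
  have hsub : 0 < Gamma (1 - y) := Gamma_pos_of_pos (by linarith)
  have hreflect : 1 < Gamma (1 + y) * Gamma (1 - y) :=
    one_lt_Gamma_one_add_mul_Gamma_one_sub (abs_lt.2 ⟨hlower, by linarith⟩) hy0
  have hconvex : Gamma (1 - y) ^ 2 ≤ Gamma (1 - 2 * y) := by
    have hmid := Gamma_midpoint_sq_le (a := 1 - 2 * y) (by linarith) one_pos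
    rwa [Gamma_one, mul_one, show (1 - 2 * y + 1) / 2 = 1 - y by ring] at hmid
  calc Gamma (1 - y) < Gamma (1 + y) * Gamma (1 - y) * Gamma (1 - y) :=
        lt_mul_of_one_lt_left hsub hreflect
    _ = Gamma (1 + y) * Gamma (1 - y) ^ 2 := by ring
    _ ≤ Gamma (1 + y) * Gamma (1 - 2 * y) := by gcongr

theorem beta_one_add_half_sub_mul_Gamma (y : ℝ) :
    beta (1 + y) (1 / 2 - y) * Gamma (1 - y) =
      2 ^ (2 * y + 1) * (Gamma (1 + y) * Gamma (1 - 2 * y)) := by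
  have hdup : Gamma (1 / 2 - y) * Gamma (1 - y) = Gamma (1 - 2 * y) * 2 ^ (2 * y) * √π := by
    convert Gamma_mul_Gamma_add_half (1 / 2 - y) using 3 <;> ring_nf
  have hsum : Gamma (1 + y + (1 / 2 - y)) = √π / 2 := by
    rw [show 1 + y + (1 / 2 - y) = 1 / 2 + 1 by ring, Gamma_add_one one_half_pos.ne',
      Gamma_one_half_eq, one_div_mul_eq_div]
  calc beta (1 + y) (1 / 2 - y) * Gamma (1 - y)
      = Gamma (1 + y) * (Gamma (1 / 2 - y) * Gamma (1 - y)) / (√π / 2) := by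
        rw [beta, hsum]; ring
    _ = 2 ^ (2 * y + 1) * (Gamma (1 + y) * Gamma (1 - 2 * y)) := by
        rw [hdup, rpow_add_one two_ne_zero]; field_simp

theorem two_rpow_lt_beta_one_add_half_sub {y : ℝ} (hy : y ∈ Ioo (-1) (1 / 2)) (hy0 : y ≠ 0) :
    2 ^ (2 * y + 1) < beta (1 + y) (1 / 2 - y) := by
  have hsub : 0 < Gamma (1 - y) := Gamma_pos_of_pos (by linarith [hy.2])
  refine lt_of_mul_lt_mul_right ?_ hsub.le
  rw [beta_one_add_half_sub_mul_Gamma]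
  gcongr
  exact Gamma_one_sub_lt_Gamma_one_add_mul hy hy0

theorem stmt14_general (s : ℝ) (hs : s ∈ Ioo (-1 / 2) 0 ∪ Ioo (1 / 2) 1) :
    (2 ^ (2 * s) - 2) / (2 * s) > 0 ∧
      (∫ t in (0:ℝ)..1, t ^ (s + 1/2 - 1) * (1 - t) ^ ((1 - s) - 1)) - 2 ^ (2 * s) > 0 := by
  have hlower : -1 / 2 < s := by rcases hs with h | h <;> linarith [h.1]
  have hupper : s < 1 := by rcases hs with h | h <;> linarith [h.2]
  have hne : s ≠ 1 / 2 := by rintro rfl; norm_num at hs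
  refine ⟨rpow_sub_self_div_pos one_lt_two ?_, sub_pos.2 ?_⟩
  · exact hs.imp (fun h => by linarith [h.2]) (fun h => by linarith [h.1])
  · rw [integral_rpow_mul_one_sub_rpow (by linarith) (by linarith)]
    convert two_rpow_lt_beta_one_add_half_sub (y := s - 1 / 2)
      ⟨by linarith, by linarith⟩ (sub_ne_zero.2 hne) using 2 <;> ring

theorem stmt14 (s : ℝ) (hs : 1/2 < s) (hs1 : s < 1) :
    (2 ^ (2 * s) - 2) / (2 * s) > 0 ∧
      (∫ t in (0:ℝ)..1, t ^ (s + 1/2 - 1) * (1 - t) ^ ((1 - s) - 1)) - 2 ^ (2 * s) > 0 :=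
  stmt14_general s (Or.inr ⟨hs, hs1⟩)
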